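/- arXiv:0801.2567 — 2 statements merged into one kernel-verified Lean document; each statement's English description precedes it below -/
import Mathlib

section
/- (Frobenius skein solutions, case A = B = 0.) Let A be an associative unital k-algebra with a Frobenius structure Δ such that A is commutative (μ∘τ = μ), Δ is cocommutative (τ∘Δ = Δ), and μ∘Δ = δ₁·id_A for some δ₁ ∈ k. Then for any c, T ∈ k, the map R = c·(Δ∘μ) + T·τ : A⊗A → A⊗A satisfies the Yang–Baxter equation; moreover, if c', T' ∈ k satisfy T·T' = 1 and c·T' + c'·T + δ₁·c·c' = 0, then (c'·(Δ∘μ) + T'·τ)∘R = id_{A⊗A}, i.e., R is invertible with inverse c'·(Δ∘μ) + T'·τ. -/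
open TensorProduct

noncomputable section

variable (k A : Type*) [Field k] [Ring A] [Algebra k A]

/-- Multiplication `μ : A ⊗[k] A → A` as a `k`-linear map. -/
def mu : A ⊗[k] A →ₗ[k] A := LinearMap.mul' k A

/-- The standard associator `(A⊗A)⊗A ≃ A⊗(A⊗A)`. -/
def asso : ((A ⊗[k] A) ⊗[k] A) ≃ₗ[k] (A ⊗[k] (A ⊗[k] A)) := TensorProduct.assoc k A A A

/-- The flip `τ : A⊗A → A⊗A`, `x⊗y ↦ y⊗x`. -/
def tau : A ⊗[k] A →ₗ[k] A ⊗[k] A := (TensorProduct.comm k A A).toLinearMap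

/-- A Frobenius structure on `A`: a coassociative comultiplication `Δ` satisfying the two
Frobenius compatibility conditions `Δ∘μ = (μ⊗id)∘(id⊗Δ) = (id⊗μ)∘(Δ⊗id)`
(composites taken with the standard associator identifications). -/
def IsFrobenius (Δ : A →ₗ[k] A ⊗[k] A) : Prop :=
  (Δ.rTensor A ∘ₗ Δ = (asso k A).symm.toLinearMap ∘ₗ Δ.lTensor A ∘ₗ Δ) ∧
  (Δ ∘ₗ mu k A = (mu k A).rTensor A ∘ₗ (asso k A).symm.toLinearMap ∘ₗ Δ.lTensor A) ∧
  (Δ ∘ₗ mu k A = (mu k A).lTensor A ∘ₗ (asso k A).toLinearMap ∘ₗ Δ.rTensor A)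

/-- `R : A⊗A → A⊗A` satisfies the Yang–Baxter equation:
`(R⊗id)∘(id⊗R)∘(R⊗id) = (id⊗R)∘(R⊗id)∘(id⊗R)` on `A⊗A⊗A`
(with the standard associator identifications). -/
def YBE (R : A ⊗[k] A →ₗ[k] A ⊗[k] A) : Prop :=
  R.rTensor A ∘ₗ
      ((asso k A).symm.toLinearMap ∘ₗ R.lTensor A ∘ₗ (asso k A).toLinearMap) ∘ₗ
      R.rTensor A =
    ((asso k A).symm.toLinearMap ∘ₗ R.lTensor A ∘ₗ (asso k A).toLinearMap) ∘ₗ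
      R.rTensor A ∘ₗ
      ((asso k A).symm.toLinearMap ∘ₗ R.lTensor A ∘ₗ (asso k A).toLinearMap)

/-!
Write `n₁, n₂` for `Δ ∘ μ` and `t₁, t₂` for the flip, acting on the first two and on the last two
factors of `A ⊗ A ⊗ A`. The Frobenius conditions, associativity and coassociativity give
`n₁ n₂ = n₂ n₁`, and (co)commutativity lets both flips be absorbed into this product. Hence, when
`Rᵢ = c nᵢ + T tᵢ` and `R₁ R₂ R₁ = R₂ R₁ R₂` is expanded, all six `c² T` terms are equal to `n₁ n₂`;
the terms linear in `c` agree because flips carry `n₁` to `n₂`, and `n₁ n₂ n₁ = n₂ n₁ n₂` because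
the 3-cycle `t₂ t₁`, which carries `n₂` to `n₁`, also fixes `n₁ n₂`. For invertibility,
`μ ∘ Δ = δ • id` makes `(Δ ∘ μ)² = δ • Δ ∘ μ`, so the product of two combinations of `Δ ∘ μ` and the
flip is a combination of `Δ ∘ μ` and the identity.
-/

section SkeinRelations

/-- The relations in a monoid between two commuting "merge and split" elements `n₁`, `n₂` and two
involutions `t₁`, `t₂` that generate an action of the symmetric group on three strands and are
absorbed by the respective `nᵢ`; `conj` says that both sides are the merge-and-split of the two
outer strands. -/
structure SkeinRelations {E : Type*} [Monoid E] (n₁ n₂ t₁ t₂ : E) : Prop where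
  flip_sq₁ : t₁ * t₁ = 1
  flip_sq₂ : t₂ * t₂ = 1
  merge_flip₁ : n₁ * t₁ = n₁
  merge_flip₂ : n₂ * t₂ = n₂
  flip_merge₁ : t₁ * n₁ = n₁
  flip_merge₂ : t₂ * n₂ = n₂
  braid : t₁ * t₂ * t₁ = t₂ * t₁ * t₂
  conj : t₁ * n₂ * t₁ = t₂ * n₁ * t₂
  comm : n₁ * n₂ = n₂ * n₁

namespace SkeinRelations

variable {E : Type*} [Monoid E] {n₁ n₂ t₁ t₂ : E}

lemma symm (h : SkeinRelations n₁ n₂ t₁ t₂) : SkeinRelations n₂ n₁ t₂ t₁ where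
  flip_sq₁ := h.flip_sq₂
  flip_sq₂ := h.flip_sq₁
  merge_flip₁ := h.merge_flip₂
  merge_flip₂ := h.merge_flip₁
  flip_merge₁ := h.flip_merge₂
  flip_merge₂ := h.flip_merge₁
  braid := h.braid.symm
  conj := h.conj.symm
  comm := h.comm.symm

lemma merge_flip_flip (h : SkeinRelations n₁ n₂ t₁ t₂) : n₁ * t₂ * t₁ = t₂ * t₁ * n₂ :=
  calc n₁ * t₂ * t₁ = t₂ * (t₂ * n₁ * t₂) * t₁ := by
        simp only [← mul_assoc, h.flip_sq₂, one_mul]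
    _ = t₂ * (t₁ * n₂ * t₁) * t₁ := by rw [h.conj]
    _ = t₂ * t₁ * n₂ := by simp only [mul_assoc, h.flip_sq₁, mul_one]

lemma flip₁_mul_merge_merge (h : SkeinRelations n₁ n₂ t₁ t₂) : t₁ * (n₁ * n₂) = n₁ * n₂ := by
  rw [← mul_assoc, h.flip_merge₁]

lemma merge_merge_mul_flip₂ (h : SkeinRelations n₁ n₂ t₁ t₂) : n₁ * n₂ * t₂ = n₁ * n₂ := by
  rw [mul_assoc, h.merge_flip₂]

lemma flip₂_mul_merge_merge (h : SkeinRelations n₁ n₂ t₁ t₂) : t₂ * (n₁ * n₂) = n₁ * n₂ := by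
  rw [h.comm, h.symm.flip₁_mul_merge_merge]

lemma merge_merge_mul_flip₁ (h : SkeinRelations n₁ n₂ t₁ t₂) : n₁ * n₂ * t₁ = n₁ * n₂ := by
  rw [h.comm, h.symm.merge_merge_mul_flip₂]

lemma merge_flip_merge (h : SkeinRelations n₁ n₂ t₁ t₂) : n₁ * t₂ * n₁ = n₁ * n₂ :=
  calc n₁ * t₂ * n₁ = n₁ * (t₂ * n₁ * t₂) * t₂ := by
        simp only [mul_assoc, h.flip_sq₂, mul_one]
    _ = n₁ * (t₁ * n₂ * t₁) * t₂ := by rw [h.conj]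
    _ = n₁ * n₂ * t₁ * t₂ := by simp only [← mul_assoc, h.merge_flip₁]
    _ = n₁ * n₂ := by rw [h.merge_merge_mul_flip₁, h.merge_merge_mul_flip₂]

lemma merge_braid (h : SkeinRelations n₁ n₂ t₁ t₂) : n₁ * n₂ * n₁ = n₂ * n₁ * n₂ :=
  calc n₁ * n₂ * n₁ = n₁ * (n₁ * n₂) := by rw [mul_assoc, h.comm]
    _ = n₁ * t₂ * t₁ * (n₁ * n₂) := by
        rw [mul_assoc _ t₁, h.flip₁_mul_merge_merge, mul_assoc, h.flip₂_mul_merge_merge]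
    _ = t₂ * (t₁ * (n₁ * n₂)) * n₂ := by
        rw [h.merge_flip_flip, h.comm]; simp only [mul_assoc, h.comm]
    _ = n₂ * n₁ * n₂ := by rw [h.flip₁_mul_merge_merge, h.flip₂_mul_merge_merge, h.comm]

end SkeinRelations

variable {K E : Type*} [CommSemiring K] [Semiring E] [Algebra K E]

theorem SkeinRelations.smul_add_smul_braid {n₁ n₂ t₁ t₂ : E} (h : SkeinRelations n₁ n₂ t₁ t₂)
    (c T : K) :
    (c • n₁ + T • t₁) * (c • n₂ + T • t₂) * (c • n₁ + T • t₁) =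
      (c • n₂ + T • t₂) * (c • n₁ + T • t₁) * (c • n₂ + T • t₂) := by
  have flip_merge_merge₁ : t₁ * n₂ * n₁ = n₁ * n₂ := by
    rw [mul_assoc, ← h.comm, h.flip₁_mul_merge_merge]
  have flip_merge_merge₂ : t₂ * n₁ * n₂ = n₁ * n₂ := by
    rw [mul_assoc, h.flip₂_mul_merge_merge]
  have merge_merge_flip₂ : n₂ * n₁ * t₂ = n₁ * n₂ := by
    rw [← h.comm, h.merge_merge_mul_flip₂]
  have merge_flip_merge₂ : n₂ * t₁ * n₂ = n₁ * n₂ := by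
    rw [h.symm.merge_flip_merge, h.comm]
  simp only [add_mul, mul_add, smul_mul_assoc, mul_smul_comm, h.merge_braid,
    h.merge_merge_mul_flip₁, merge_merge_flip₂, h.merge_flip_merge, merge_flip_merge₂,
    flip_merge_merge₁, flip_merge_merge₂, h.merge_flip_flip, h.symm.merge_flip_flip, h.conj,
    h.braid]
  module

theorem smul_add_smul_mul_smul_add_smul_eq_one {n t : E} (ht : t * t = 1) (hnt : n * t = n)
    (htn : t * n = n) {δ : K} (hn : n * n = δ • n) {c T c' T' : K} (hT : T * T' = 1)
    (hc : c * T' + c' * T + δ * c * c' = 0) :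
    (c' • n + T' • t) * (c • n + T • t) = 1 :=
  calc (c' • n + T' • t) * (c • n + T • t)
      = (c * T' + c' * T + δ * c * c') • n + (T * T') • 1 := by
        simp only [add_mul, mul_add, smul_mul_assoc, mul_smul_comm, ht, hnt, htn, hn]
        module
    _ = 1 := by rw [hc, hT, zero_smul, one_smul, zero_add]

end SkeinRelations

section Legs

variable {K M : Type*} [CommSemiring K] [AddCommMonoid M] [Module K M]

/-- The operator `f ⊗ id` on `(M ⊗ M) ⊗ M`, traditionally written `f₁₂`. -/
def leg₁₂ : Module.End K (M ⊗[K] M) →ₐ[K] Module.End K ((M ⊗[K] M) ⊗[K] M) :=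
  Module.End.rTensorAlgHom K (M ⊗[K] M) M

/-- The operator `id ⊗ f`, traditionally written `f₂₃`, transported along the associator so that
it acts on the same module `(M ⊗ M) ⊗ M` as `leg₁₂ f`. -/
def leg₂₃ : Module.End K (M ⊗[K] M) →ₐ[K] Module.End K ((M ⊗[K] M) ⊗[K] M) :=
  ((TensorProduct.assoc K M M M).symm.conjAlgEquiv K).toAlgHom.comp
    (Module.End.lTensorAlgHom K (M ⊗[K] M) M)

/-- The Yang–Baxter equation in its braid form, over an arbitrary commutative semiring. -/
def IsYangBaxter (f : Module.End K (M ⊗[K] M)) : Prop :=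
  leg₁₂ f * leg₂₃ f * leg₁₂ f = leg₂₃ f * leg₁₂ f * leg₂₃ f

/-- The flip `x ⊗ y ↦ y ⊗ x`, as an element of the endomorphism algebra. -/
def flipEnd : Module.End K (M ⊗[K] M) := (TensorProduct.comm K M M).toLinearMap

lemma flipEnd_mul_self : (flipEnd : Module.End K (M ⊗[K] M)) * flipEnd = 1 := by
  ext x y
  simp [flipEnd]

lemma flipEnd_tmul (x y : M) : flipEnd (x ⊗ₜ[K] y) = y ⊗ₜ x := rfl

lemma leg₁₂_tmul (f : Module.End K (M ⊗[K] M)) (w : M ⊗[K] M) (z : M) :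
    leg₁₂ f (w ⊗ₜ z) = f w ⊗ₜ z := rfl

lemma leg₂₃_tmul (f : Module.End K (M ⊗[K] M)) (x y z : M) :
    leg₂₃ f (x ⊗ₜ y ⊗ₜ z) = (TensorProduct.assoc K M M M).symm (x ⊗ₜ f (y ⊗ₜ z)) := rfl

lemma leg₁₂_flipEnd_assoc_symm_tmul (y : M) (w : M ⊗[K] M) :
    leg₁₂ flipEnd ((TensorProduct.assoc K M M M).symm (y ⊗ₜ w)) = leg₂₃ flipEnd (w ⊗ₜ y) := by
  induction w with
  | zero => simp
  | tmul a b => simp [leg₁₂_tmul, leg₂₃_tmul, flipEnd_tmul]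
  | add a b ha hb => simp only [tmul_add, add_tmul, map_add, ha, hb]

-- Both sides are `f` acting on the outer two factors, usually written `f₁₃`.
lemma leg₁₂_flipEnd_conj_leg₂₃ (f : Module.End K (M ⊗[K] M)) :
    leg₁₂ flipEnd * leg₂₃ f * leg₁₂ flipEnd = leg₂₃ flipEnd * leg₁₂ f * leg₂₃ flipEnd := by
  ext x y z
  simpa [leg₁₂_tmul, leg₂₃_tmul, flipEnd_tmul] using leg₁₂_flipEnd_assoc_symm_tmul y (f (x ⊗ₜ z))

end Legs

section Frobenius

variable {K M : Type*} [CommSemiring K] [AddCommMonoid M] [Module K M]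
  {μ : M ⊗[K] M →ₗ[K] M} {Δ : M →ₗ[K] M ⊗[K] M}

/-- A Frobenius algebra without unit and counit, internal to modules over a commutative semiring:
an associative product `μ` and a coassociative coproduct `Δ` with the two Frobenius
compatibilities. -/
structure IsNonunitalFrobenius (μ : M ⊗[K] M →ₗ[K] M) (Δ : M →ₗ[K] M ⊗[K] M) : Prop where
  mul_assoc : μ ∘ₗ μ.rTensor M = μ ∘ₗ μ.lTensor M ∘ₗ (TensorProduct.assoc K M M M).toLinearMap
  coassoc : Δ.rTensor M ∘ₗ Δ =
    (TensorProduct.assoc K M M M).symm.toLinearMap ∘ₗ Δ.lTensor M ∘ₗ Δ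
  comul_mul_left : Δ ∘ₗ μ =
    μ.rTensor M ∘ₗ (TensorProduct.assoc K M M M).symm.toLinearMap ∘ₗ Δ.lTensor M
  comul_mul_right : Δ ∘ₗ μ =
    μ.lTensor M ∘ₗ (TensorProduct.assoc K M M M).toLinearMap ∘ₗ Δ.rTensor M

lemma IsNonunitalFrobenius.leg₁₂_mul_leg₂₃ (h : IsNonunitalFrobenius μ Δ) :
    leg₁₂ (Δ ∘ₗ μ) * leg₂₃ (Δ ∘ₗ μ) = leg₂₃ (Δ ∘ₗ μ) * leg₁₂ (Δ ∘ₗ μ) := by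
  let α := (TensorProduct.assoc K M M M).toLinearMap
  let β := (TensorProduct.assoc K M M M).symm.toLinearMap
  have leg₁₂_eq : leg₁₂ (Δ ∘ₗ μ) = Δ.rTensor M ∘ₗ μ.rTensor M := LinearMap.rTensor_comp M Δ μ
  have leg₂₃_eq : leg₂₃ (Δ ∘ₗ μ) = β ∘ₗ Δ.lTensor M ∘ₗ μ.lTensor M ∘ₗ α :=
    congr(β ∘ₗ $(LinearMap.lTensor_comp M Δ μ) ∘ₗ α)
  calc leg₁₂ (Δ ∘ₗ μ) * leg₂₃ (Δ ∘ₗ μ)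
      = Δ.rTensor M ∘ₗ (μ.rTensor M ∘ₗ β ∘ₗ Δ.lTensor M) ∘ₗ μ.lTensor M ∘ₗ α := by
        rw [leg₁₂_eq, leg₂₃_eq]; rfl
    _ = (Δ.rTensor M ∘ₗ Δ) ∘ₗ (μ ∘ₗ μ.lTensor M ∘ₗ α) := by rw [← h.comul_mul_left]; rfl
    _ = (β ∘ₗ Δ.lTensor M ∘ₗ Δ) ∘ₗ (μ ∘ₗ μ.rTensor M) := by rw [h.coassoc, h.mul_assoc]
    _ = β ∘ₗ Δ.lTensor M ∘ₗ (μ.lTensor M ∘ₗ α ∘ₗ Δ.rTensor M) ∘ₗ μ.rTensor M := by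
        rw [← h.comul_mul_right]; rfl
    _ = leg₂₃ (Δ ∘ₗ μ) * leg₁₂ (Δ ∘ₗ μ) := by rw [leg₁₂_eq, leg₂₃_eq]; rfl

lemma comul_mul_mul_flipEnd (hμ : μ ∘ₗ flipEnd = μ) :
    (Δ ∘ₗ μ : Module.End K (M ⊗[K] M)) * flipEnd = Δ ∘ₗ μ :=
  congr(Δ ∘ₗ $hμ)

lemma flipEnd_mul_comul_mul (hΔ : flipEnd ∘ₗ Δ = Δ) :
    flipEnd * (Δ ∘ₗ μ : Module.End K (M ⊗[K] M)) = Δ ∘ₗ μ :=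
  congr($hΔ ∘ₗ μ)

lemma comul_mul_mul_self {δ : K} (hδ : μ ∘ₗ Δ = δ • LinearMap.id) :
    (Δ ∘ₗ μ : Module.End K (M ⊗[K] M)) * (Δ ∘ₗ μ) = δ • (Δ ∘ₗ μ) :=
  calc (Δ ∘ₗ μ : Module.End K (M ⊗[K] M)) * (Δ ∘ₗ μ) = Δ ∘ₗ (μ ∘ₗ Δ) ∘ₗ μ := rfl
    _ = δ • (Δ ∘ₗ μ) := by rw [hδ, LinearMap.smul_comp, LinearMap.comp_smul, LinearMap.id_comp]

lemma IsNonunitalFrobenius.skeinRelations (h : IsNonunitalFrobenius μ Δ)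
    (hμ : μ ∘ₗ flipEnd = μ) (hΔ : flipEnd ∘ₗ Δ = Δ) :
    SkeinRelations (leg₁₂ (Δ ∘ₗ μ)) (leg₂₃ (Δ ∘ₗ μ)) (leg₁₂ flipEnd) (leg₂₃ flipEnd) where
  flip_sq₁ := by rw [← map_mul, flipEnd_mul_self, map_one]
  flip_sq₂ := by rw [← map_mul, flipEnd_mul_self, map_one]
  merge_flip₁ := by rw [← map_mul, comul_mul_mul_flipEnd hμ]
  merge_flip₂ := by rw [← map_mul, comul_mul_mul_flipEnd hμ]
  flip_merge₁ := by rw [← map_mul, flipEnd_mul_comul_mul hΔ]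
  flip_merge₂ := by rw [← map_mul, flipEnd_mul_comul_mul hΔ]
  braid := leg₁₂_flipEnd_conj_leg₂₃ flipEnd
  conj := leg₁₂_flipEnd_conj_leg₂₃ (Δ ∘ₗ μ)
  comm := h.leg₁₂_mul_leg₂₃

theorem IsNonunitalFrobenius.isYangBaxter (h : IsNonunitalFrobenius μ Δ)
    (hμ : μ ∘ₗ flipEnd = μ) (hΔ : flipEnd ∘ₗ Δ = Δ) (c T : K) :
    IsYangBaxter (c • (Δ ∘ₗ μ) + T • flipEnd) := by
  simpa only [IsYangBaxter, map_add, map_smul] using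
    (h.skeinRelations hμ hΔ).smul_add_smul_braid c T

theorem comp_smul_add_smul_flipEnd_eq_id (hμ : μ ∘ₗ flipEnd = μ) (hΔ : flipEnd ∘ₗ Δ = Δ)
    {δ : K} (hδ : μ ∘ₗ Δ = δ • LinearMap.id) {c T c' T' : K} (hT : T * T' = 1)
    (hc : c * T' + c' * T + δ * c * c' = 0) :
    (c' • (Δ ∘ₗ μ) + T' • flipEnd) ∘ₗ (c • (Δ ∘ₗ μ) + T • flipEnd) = LinearMap.id :=
  smul_add_smul_mul_smul_add_smul_eq_one flipEnd_mul_self (comul_mul_mul_flipEnd hμ)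
    (flipEnd_mul_comul_mul hΔ) (comul_mul_mul_self hδ) hT hc

theorem frobenius_skein_case_AB_zero_general (h : IsNonunitalFrobenius μ Δ)
    (hμ : μ ∘ₗ flipEnd = μ) (hΔ : flipEnd ∘ₗ Δ = Δ) (c T : K) :
    IsYangBaxter (c • (Δ ∘ₗ μ) + T • flipEnd) ∧
    ∀ δ : K, μ ∘ₗ Δ = δ • LinearMap.id →
      ∀ c' T' : K, T * T' = 1 → c * T' + c' * T + δ * c * c' = 0 →
        (c' • (Δ ∘ₗ μ) + T' • flipEnd) ∘ₗ (c • (Δ ∘ₗ μ) + T • flipEnd) = LinearMap.id ∧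
        (c • (Δ ∘ₗ μ) + T • flipEnd) ∘ₗ (c' • (Δ ∘ₗ μ) + T' • flipEnd) = LinearMap.id := by
  refine ⟨h.isYangBaxter hμ hΔ c T, fun δ hδ c' T' hT hc => ⟨?_, ?_⟩⟩
  · exact comp_smul_add_smul_flipEnd_eq_id hμ hΔ hδ hT hc
  · refine comp_smul_add_smul_flipEnd_eq_id hμ hΔ hδ (mul_comm T T' ▸ hT) ?_
    rw [add_comm (c' * T), mul_right_comm, hc]

end Frobenius

variable {k A} in
lemma IsFrobenius.isNonunitalFrobenius {Δ : A →ₗ[k] A ⊗[k] A} (hΔ : IsFrobenius k A Δ) :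
    IsNonunitalFrobenius (mu k A) Δ where
  mul_assoc := by
    ext x y z
    simp [mu, mul_assoc]
  coassoc := hΔ.1
  comul_mul_left := hΔ.2.1
  comul_mul_right := hΔ.2.2

/-- Frobenius skein solutions, case `A = B = 0`: if `A` is commutative
(`μ∘τ = μ`), `Δ` is cocommutative (`τ∘Δ = Δ`), and `μ∘Δ = δ₁·id`, then for any `c, T ∈ k`
the map `R = c·(Δ∘μ) + T·τ` satisfies the YBE; moreover if `T·T' = 1` and
`c·T' + c'·T + δ₁·c·c' = 0` then `c'·(Δ∘μ) + T'·τ` is a two-sided inverse of `R`. -/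
theorem frobenius_skein_case_AB_zero (Δ : A →ₗ[k] A ⊗[k] A) (hΔ : IsFrobenius k A Δ)
    (hcomm : mu k A ∘ₗ tau k A = mu k A) (hcocomm : tau k A ∘ₗ Δ = Δ)
    (δ₁ : k) (hhandle : mu k A ∘ₗ Δ = δ₁ • LinearMap.id)
    (c T : k) :
    YBE k A (c • (Δ ∘ₗ mu k A) + T • tau k A) ∧
    ∀ c' T' : k, T * T' = 1 → c * T' + c' * T + δ₁ * c * c' = 0 →
      (c' • (Δ ∘ₗ mu k A) + T' • tau k A) ∘ₗ (c • (Δ ∘ₗ mu k A) + T • tau k A) =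
        LinearMap.id ∧
      (c • (Δ ∘ₗ mu k A) + T • tau k A) ∘ₗ (c' • (Δ ∘ₗ mu k A) + T' • tau k A) =
        LinearMap.id := by
  obtain ⟨hYB, hinv⟩ :=
    frobenius_skein_case_AB_zero_general hΔ.isNonunitalFrobenius hcomm hcocomm c T
  exact ⟨hYB, hinv δ₁ hhandle⟩
end
end

section
/- (Cocycle deformation of R-matrices, stated modulo t².) Let A be an associative unital k-algebra with a Frobenius structure Δ such that A is commutative (μ∘τ = μ) and Δ is cocommutative (τ∘Δ = Δ). Let φ₁ : A⊗A → A and φ₂ : A → A⊗A be k-linear maps satisfying all four 2-cocycle conditions d^{2,1}(φ₁) = 0, d^{2,2}_{(1)}(φ₁,φ₂) = 0, d^{2,2}_{(2)}(φ₁,φ₂) = 0, d^{2,3}(φ₂) = 0, together with φ₁∘τ = φ₁ and τ∘φ₂ = φ₂. Assume moreover that there exist c₀, c₁ ∈ k with μ∘Δ = c₀·id_A and μ∘φ₂ + φ₁∘Δ = c₁·id_A (i.e., (μ + tφ₁)∘(Δ + tφ₂) = δ₁·id with δ₁ = c₀ + c₁t modulo t²). Fix C, T ∈ k and set R₀ =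 C·(Δ∘μ) + T·τ and R₁ = C·(Δ∘φ₁ + φ₂∘μ), both maps A⊗A → A⊗A. Then R₀ + tR₁ satisfies the Yang–Baxter equation over k[t]/(t²); explicitly: (1) (R₀⊗id)(id⊗R₀)(R₀⊗id) = (id⊗R₀)(R₀⊗id)(id⊗R₀), and (2) (R₁⊗id)(id⊗R₀)(R₀⊗id) + (R₀⊗id)(id⊗R₁)(R₀⊗id) + (R₀⊗id)(id⊗R₀)(R₁⊗id) = (id⊗R₁)(R₀⊗id)(id⊗R₀) + (id⊗R₀)(R₁⊗id)(id⊗R₀) + (id⊗R₀)(R₀⊗id)(id⊗R₁) as maps A⊗A⊗A → A⊗A⊗A. -/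
open TensorProduct

noncomputable section

variable (k A : Type*) [Field k] [Ring A] [Algebra k A]

/-- `d^{1,1}(h) = μ∘(h⊗id) + μ∘(id⊗h) − h∘μ`. -/
def d11 (h : A →ₗ[k] A) : A ⊗[k] A →ₗ[k] A :=
  mu k A ∘ₗ h.rTensor A + mu k A ∘ₗ h.lTensor A - h ∘ₗ mu k A

/-- `d^{1,2}(h) = (h⊗id)∘Δ + (id⊗h)∘Δ − Δ∘h`. -/
def d12 (Δ : A →ₗ[k] A ⊗[k] A) (h : A →ₗ[k] A) : A →ₗ[k] A ⊗[k] A :=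
  h.rTensor A ∘ₗ Δ + h.lTensor A ∘ₗ Δ - Δ ∘ₗ h

/-- `d^{2,1}(φ₁) = μ∘(φ₁⊗id) + φ₁∘(μ⊗id) − μ∘(id⊗φ₁) − φ₁∘(id⊗μ)`. -/
def d21 (φ₁ : A ⊗[k] A →ₗ[k] A) : ((A ⊗[k] A) ⊗[k] A) →ₗ[k] A :=
  mu k A ∘ₗ φ₁.rTensor A + φ₁ ∘ₗ (mu k A).rTensor A
  - mu k A ∘ₗ φ₁.lTensor A ∘ₗ (asso k A).toLinearMap
  - φ₁ ∘ₗ (mu k A).lTensor A ∘ₗ (asso k A).toLinearMap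

/-- `d^{2,2}_{(1)}(φ₁,φ₂) = Δ∘φ₁ + φ₂∘μ − (φ₁⊗id)∘(id⊗Δ) − (μ⊗id)∘(id⊗φ₂)`. -/
def d221 (Δ : A →ₗ[k] A ⊗[k] A) (φ₁ : A ⊗[k] A →ₗ[k] A) (φ₂ : A →ₗ[k] A ⊗[k] A) :
    A ⊗[k] A →ₗ[k] A ⊗[k] A :=
  Δ ∘ₗ φ₁ + φ₂ ∘ₗ mu k A
  - φ₁.rTensor A ∘ₗ (asso k A).symm.toLinearMap ∘ₗ Δ.lTensor A
  - (mu k A).rTensor A ∘ₗ (asso k A).symm.toLinearMap ∘ₗ φ₂.lTensor A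

/-- `d^{2,2}_{(2)}(φ₁,φ₂) = Δ∘φ₁ + φ₂∘μ − (id⊗φ₁)∘(Δ⊗id) − (id⊗μ)∘(φ₂⊗id)`. -/
def d222 (Δ : A →ₗ[k] A ⊗[k] A) (φ₁ : A ⊗[k] A →ₗ[k] A) (φ₂ : A →ₗ[k] A ⊗[k] A) :
    A ⊗[k] A →ₗ[k] A ⊗[k] A :=
  Δ ∘ₗ φ₁ + φ₂ ∘ₗ mu k A
  - φ₁.lTensor A ∘ₗ (asso k A).toLinearMap ∘ₗ Δ.rTensor A
  - (mu k A).lTensor A ∘ₗ (asso k A).toLinearMap ∘ₗ φ₂.rTensor A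

/-- `d^{2,3}(φ₂) = (φ₂⊗id)∘Δ + (Δ⊗id)∘φ₂ − (id⊗φ₂)∘Δ − (id⊗Δ)∘φ₂`. -/
def d23 (Δ : A →ₗ[k] A ⊗[k] A) (φ₂ : A →ₗ[k] A ⊗[k] A) :
    A →ₗ[k] (A ⊗[k] A) ⊗[k] A :=
  φ₂.rTensor A ∘ₗ Δ + Δ.rTensor A ∘ₗ φ₂
  - (asso k A).symm.toLinearMap ∘ₗ φ₂.lTensor A ∘ₗ Δ
  - (asso k A).symm.toLinearMap ∘ₗ Δ.lTensor A ∘ₗ φ₂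

/-- `R ⊗ id` on `(A⊗A)⊗A`. -/
def rext (R : A ⊗[k] A →ₗ[k] A ⊗[k] A) :
    ((A ⊗[k] A) ⊗[k] A) →ₗ[k] ((A ⊗[k] A) ⊗[k] A) := R.rTensor A

/-- `id ⊗ R` on `(A⊗A)⊗A` (via the associator). -/
def lext (R : A ⊗[k] A →ₗ[k] A ⊗[k] A) :
    ((A ⊗[k] A) ⊗[k] A) →ₗ[k] ((A ⊗[k] A) ⊗[k] A) :=
  (asso k A).symm.toLinearMap ∘ₗ R.lTensor A ∘ₗ (asso k A).toLinearMap

/-!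
The pair `(μ + εφ₁, Δ + εφ₂)` is a commutative Frobenius structure over the dual numbers, so (1) and
(2) are the two coefficients of one Yang–Baxter equation, for `R = C Δμ + T τ`. That equation holds
for every commutative Frobenius structure. Write `a = Δμ ⊗ id`, `b = id ⊗ Δμ`, `s = τ ⊗ id` and
`r = id ⊗ τ`. Commutativity makes `s` absorb into `a` and `r` into `b`, and the Frobenius relations
turn `ab`, `ba`, `ara`, `bsb` into the single operator `Δ²μ²` that multiplies three factors and
splits the product into three. Both `a` and `b` act on `Δ²` as `Δ² ∘ (μΔ)`, so `aba = bab`; the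
other terms match by naturality of the flip.
-/

section OperatorRelations

theorem mul_braid_eq_braid_mul {S : Type*} [Monoid S] {a b s r : S} (hs : s * s = 1)
    (hr : r * r = 1) (nat : s * r * a = b * s * r) : a * r * s = r * s * b := by
  calc a * r * s = r * s * (s * r * a) * r * s := by
        simp only [← mul_assoc, mul_assoc r s s, hs, hr, mul_one, one_mul]
    _ = r * s * b := by rw [nat]; simp only [mul_assoc, hs, hr, mul_one]

theorem conj_eq_conj_of_braid_mul {S : Type*} [Monoid S] {a b s r : S} (hs : s * s = 1)
    (hr : r * r = 1) (nat : s * r * a = b * s * r) : s * b * s = r * a * r := by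
  calc s * b * s = s * (b * s * r) * r := by simp only [mul_assoc, hr, mul_one]
    _ = r * a * r := by rw [← nat]; simp only [← mul_assoc, hs, one_mul]

theorem yangBaxter_smul_add_smul {K S : Type*} [CommSemiring K] [Semiring S] [Algebra K S]
    {a b s r : S} (hs : s * s = 1) (hr : r * r = 1) (braid : s * r * s = r * s * r)
    (nat : s * r * a = b * s * r) (hsa : s * a = a) (has : a * s = a) (hrb : r * b = b)
    (hbr : b * r = b) (hab : a * b = b * a) (hara : a * r * a = a * b)
    (haab : a * (a * b) = b * (a * b)) (C T : K) :
    (C • a + T • s) * (C • b + T • r) * (C • a + T • s) =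
      (C • b + T • r) * (C • a + T • s) * (C • b + T • r) := by
  have hars : a * r * s = r * s * b := mul_braid_eq_braid_mul hs hr nat
  have hsbs : s * b * s = r * a * r := conj_eq_conj_of_braid_mul hs hr nat
  have hbsb : b * s * b = a * b := by
    calc b * s * b = b * s * r * b := by rw [mul_assoc _ r, hrb]
      _ = s * r * (b * a) := by rw [← nat, mul_assoc, hab]
      _ = a * b := by rw [mul_assoc, ← mul_assoc r, hrb, ← hab, ← mul_assoc, hsa]
  have haba : a * b * a = b * a * b := by rw [mul_assoc, mul_assoc b, ← hab, haab]
  have habs : a * b * s = a * b := by rw [hab, mul_assoc, has]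
  have hsba : s * b * a = a * b := by rw [mul_assoc, ← hab, ← mul_assoc, hsa]
  have hbar : b * a * r = a * b := by rw [← hab, mul_assoc, hbr]
  have hrab : r * a * b = a * b := by rw [mul_assoc, hab, ← mul_assoc, hrb]
  simp only [mul_add, add_mul, smul_mul_assoc, mul_smul_comm, smul_add, smul_smul,
    haba, habs, hsba, hbar, hrab, hara, hbsb, hsbs, hars, nat, braid]
  module

end OperatorRelations

section Diagram

variable {K V₁ V₂ V₃ : Type*} [CommSemiring K] [AddCommMonoid V₁] [Module K V₁]
  [AddCommMonoid V₂] [Module K V₂] [AddCommMonoid V₃] [Module K V₃]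

/-- The relations between the structure maps of a commutative Frobenius algebra `A` on `A`,
`A ⊗ A` and `A ⊗ A ⊗ A`: multiplication `m` and comultiplication `D`, their copies acting on
two neighbouring tensor legs, the flip `σ` of `A ⊗ A`, and the flips `s`, `r` of the first two
and of the last two legs of `A ⊗ A ⊗ A`. The tensor powers are replaced by arbitrary modules so
that the relations can be stated for first-order families as well. -/
structure IsCommFrobeniusDiagram (m : V₂ →ₗ[K] V₁) (D : V₁ →ₗ[K] V₂) (m₁₂ m₂₃ : V₃ →ₗ[K] V₂)
    (D₁₂ D₂₃ : V₂ →ₗ[K] V₃) (σ : V₂ →ₗ[K] V₂) (s r : V₃ →ₗ[K] V₃) : Prop where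
  flip_flip₁₂ : s ∘ₗ s = LinearMap.id
  flip_flip₂₃ : r ∘ₗ r = LinearMap.id
  braid : s ∘ₗ r ∘ₗ s = r ∘ₗ s ∘ₗ r
  mul_natural : m₂₃ ∘ₗ s ∘ₗ r = σ ∘ₗ m₁₂
  comul_natural : s ∘ₗ r ∘ₗ D₁₂ = D₂₃ ∘ₗ σ
  mul_comm : m ∘ₗ σ = m
  mul_comm₁₂ : m₁₂ ∘ₗ s = m₁₂
  mul_comm₂₃ : m₂₃ ∘ₗ r = m₂₃
  comul_comm₁₂ : s ∘ₗ D₁₂ = D₁₂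
  comul_comm₂₃ : r ∘ₗ D₂₃ = D₂₃
  mul_assoc : m ∘ₗ m₁₂ = m ∘ₗ m₂₃
  comul_coassoc : D₁₂ ∘ₗ D = D₂₃ ∘ₗ D
  frobenius_left : D ∘ₗ m = m₁₂ ∘ₗ D₂₃
  frobenius_right : D ∘ₗ m = m₂₃ ∘ₗ D₁₂

namespace IsCommFrobeniusDiagram

variable {m : V₂ →ₗ[K] V₁} {D : V₁ →ₗ[K] V₂} {m₁₂ m₂₃ : V₃ →ₗ[K] V₂} {D₁₂ D₂₃ : V₂ →ₗ[K] V₃}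
  {σ : V₂ →ₗ[K] V₂} {s r : V₃ →ₗ[K] V₃}

theorem comul_mul₁₂_comp_comul_mul₂₃
    (h : IsCommFrobeniusDiagram m D m₁₂ m₂₃ D₁₂ D₂₃ σ s r) :
    (D₁₂ ∘ₗ m₁₂) ∘ₗ D₂₃ ∘ₗ m₂₃ = (D₁₂ ∘ₗ D) ∘ₗ m ∘ₗ m₁₂ := by
  calc (D₁₂ ∘ₗ m₁₂) ∘ₗ D₂₃ ∘ₗ m₂₃
      = D₁₂ ∘ₗ (D ∘ₗ m) ∘ₗ m₂₃ := congr(D₁₂ ∘ₗ $(h.frobenius_left.symm) ∘ₗ m₂₃)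
    _ = (D₁₂ ∘ₗ D) ∘ₗ m ∘ₗ m₁₂ := congr((D₁₂ ∘ₗ D) ∘ₗ $(h.mul_assoc.symm))

theorem comul_mul₂₃_comp_comul_mul₁₂
    (h : IsCommFrobeniusDiagram m D m₁₂ m₂₃ D₁₂ D₂₃ σ s r) :
    (D₂₃ ∘ₗ m₂₃) ∘ₗ D₁₂ ∘ₗ m₁₂ = (D₁₂ ∘ₗ D) ∘ₗ m ∘ₗ m₁₂ := by
  calc (D₂₃ ∘ₗ m₂₃) ∘ₗ D₁₂ ∘ₗ m₁₂
      = D₂₃ ∘ₗ (D ∘ₗ m) ∘ₗ m₁₂ := congr(D₂₃ ∘ₗ $(h.frobenius_right.symm) ∘ₗ m₁₂)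
    _ = (D₁₂ ∘ₗ D) ∘ₗ m ∘ₗ m₁₂ := congr($(h.comul_coassoc.symm) ∘ₗ m ∘ₗ m₁₂)

theorem mul₁₂_comp_flip₂₃_comp_comul₁₂
    (h : IsCommFrobeniusDiagram m D m₁₂ m₂₃ D₁₂ D₂₃ σ s r) :
    m₁₂ ∘ₗ r ∘ₗ D₁₂ = D ∘ₗ m := by
  calc m₁₂ ∘ₗ r ∘ₗ D₁₂
      = m₁₂ ∘ₗ s ∘ₗ r ∘ₗ D₁₂ := congr($(h.mul_comm₁₂.symm) ∘ₗ r ∘ₗ D₁₂)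
    _ = m₁₂ ∘ₗ D₂₃ ∘ₗ σ := congr(m₁₂ ∘ₗ $h.comul_natural)
    _ = D ∘ₗ m ∘ₗ σ := congr($(h.frobenius_left.symm) ∘ₗ σ)
    _ = D ∘ₗ m := congr(D ∘ₗ $h.mul_comm)

theorem comul_mul₁₂_comp_flip₂₃_comp_comul_mul₁₂
    (h : IsCommFrobeniusDiagram m D m₁₂ m₂₃ D₁₂ D₂₃ σ s r) :
    (D₁₂ ∘ₗ m₁₂) ∘ₗ r ∘ₗ D₁₂ ∘ₗ m₁₂ = (D₁₂ ∘ₗ D) ∘ₗ m ∘ₗ m₁₂ :=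
  congr(D₁₂ ∘ₗ $(h.mul₁₂_comp_flip₂₃_comp_comul₁₂) ∘ₗ m₁₂)

theorem comul_mul₁₂_comp_comul₁₂_comul
    (h : IsCommFrobeniusDiagram m D m₁₂ m₂₃ D₁₂ D₂₃ σ s r) :
    (D₁₂ ∘ₗ m₁₂) ∘ₗ D₁₂ ∘ₗ D = (D₂₃ ∘ₗ m₂₃) ∘ₗ D₁₂ ∘ₗ D := by
  calc (D₁₂ ∘ₗ m₁₂) ∘ₗ D₁₂ ∘ₗ D
      = (D₁₂ ∘ₗ m₁₂) ∘ₗ D₂₃ ∘ₗ D := congr((D₁₂ ∘ₗ m₁₂) ∘ₗ $h.comul_coassoc)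
    _ = D₁₂ ∘ₗ (D ∘ₗ m) ∘ₗ D := congr(D₁₂ ∘ₗ $(h.frobenius_left.symm) ∘ₗ D)
    _ = D₂₃ ∘ₗ (D ∘ₗ m) ∘ₗ D := congr($h.comul_coassoc ∘ₗ m ∘ₗ D)
    _ = (D₂₃ ∘ₗ m₂₃) ∘ₗ D₁₂ ∘ₗ D := congr(D₂₃ ∘ₗ $h.frobenius_right ∘ₗ D)

theorem yangBaxter (h : IsCommFrobeniusDiagram m D m₁₂ m₂₃ D₁₂ D₂₃ σ s r) (C T : K) :
    (C • (D₁₂ ∘ₗ m₁₂) + T • s) ∘ₗ (C • (D₂₃ ∘ₗ m₂₃) + T • r) ∘ₗ (C • (D₁₂ ∘ₗ m₁₂) + T • s) =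
      (C • (D₂₃ ∘ₗ m₂₃) + T • r) ∘ₗ (C • (D₁₂ ∘ₗ m₁₂) + T • s) ∘ₗ
        (C • (D₂₃ ∘ₗ m₂₃) + T • r) := by
  refine yangBaxter_smul_add_smul (S := Module.End K V₃) h.flip_flip₁₂ h.flip_flip₂₃ h.braid
    ?nat ?sa ?as ?rb ?br ?ab ?ara ?aab C T
  case nat =>
    calc (s ∘ₗ r) ∘ₗ D₁₂ ∘ₗ m₁₂ = D₂₃ ∘ₗ σ ∘ₗ m₁₂ := congr($h.comul_natural ∘ₗ m₁₂)
      _ = ((D₂₃ ∘ₗ m₂₃) ∘ₗ s) ∘ₗ r := congr(D₂₃ ∘ₗ $(h.mul_natural.symm))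
  case sa => exact congr($(h.comul_comm₁₂) ∘ₗ m₁₂)
  case as => exact congr(D₁₂ ∘ₗ $(h.mul_comm₁₂))
  case rb => exact congr($(h.comul_comm₂₃) ∘ₗ m₂₃)
  case br => exact congr(D₂₃ ∘ₗ $(h.mul_comm₂₃))
  case ab => exact h.comul_mul₁₂_comp_comul_mul₂₃.trans h.comul_mul₂₃_comp_comul_mul₁₂.symm
  case ara =>
    exact h.comul_mul₁₂_comp_flip₂₃_comp_comul_mul₁₂.trans
      h.comul_mul₁₂_comp_comul_mul₂₃.symm
  case aab =>
    simp only [Module.End.mul_eq_comp, h.comul_mul₁₂_comp_comul_mul₂₃]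
    exact congr($(h.comul_mul₁₂_comp_comul₁₂_comul) ∘ₗ m ∘ₗ m₁₂)

end IsCommFrobeniusDiagram

end Diagram

section FirstOrder

variable {K U V W X : Type*} [CommSemiring K] [AddCommMonoid U] [Module K U]
  [AddCommMonoid V] [Module K V] [AddCommMonoid W] [Module K W] [AddCommMonoid X] [Module K X]

/-- The first-order family `f₀ + εf₁`, as a map `V[ε] → W[ε]` of modules over the dual numbers;
`V[ε] = V ⊕ εV` is encoded as `V × V`, and only the linearity over `K` is recorded. -/
def firstOrder (f₀ f₁ : V →ₗ[K] W) : V × V →ₗ[K] W × W :=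
  (f₀ ∘ₗ LinearMap.fst K V V).prod (f₀ ∘ₗ LinearMap.snd K V V + f₁ ∘ₗ LinearMap.fst K V V)

theorem firstOrder_apply (f₀ f₁ : V →ₗ[K] W) (x : V × V) :
    firstOrder f₀ f₁ x = (f₀ x.1, f₀ x.2 + f₁ x.1) :=
  rfl

theorem firstOrder_inj {f₀ f₁ g₀ g₁ : V →ₗ[K] W} :
    firstOrder f₀ f₁ = firstOrder g₀ g₁ ↔ f₀ = g₀ ∧ f₁ = g₁ := by
  refine ⟨fun h ↦ ?_, fun ⟨h₀, h₁⟩ ↦ by rw [h₀, h₁]⟩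
  have hx (x : V) : f₀ x = g₀ x ∧ f₁ x = g₁ x := by
    simpa [firstOrder_apply] using LinearMap.congr_fun h (x, 0)
  exact ⟨LinearMap.ext fun x ↦ (hx x).1, LinearMap.ext fun x ↦ (hx x).2⟩

theorem firstOrder_id_zero : firstOrder (LinearMap.id : V →ₗ[K] V) 0 = LinearMap.id := by
  ext x <;> simp [firstOrder_apply]

theorem firstOrder_add (f₀ f₁ g₀ g₁ : V →ₗ[K] W) :
    firstOrder f₀ f₁ + firstOrder g₀ g₁ = firstOrder (f₀ + g₀) (f₁ + g₁) := by
  ext x <;> simp [firstOrder_apply]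

theorem firstOrder_smul (c : K) (f₀ f₁ : V →ₗ[K] W) :
    c • firstOrder f₀ f₁ = firstOrder (c • f₀) (c • f₁) := by
  ext x <;> simp [firstOrder_apply]

theorem firstOrder_comp (g₀ g₁ : V →ₗ[K] W) (f₀ f₁ : U →ₗ[K] V) :
    firstOrder g₀ g₁ ∘ₗ firstOrder f₀ f₁ =
      firstOrder (g₀ ∘ₗ f₀) (g₀ ∘ₗ f₁ + g₁ ∘ₗ f₀) := by
  ext x <;> simp [firstOrder_apply]

theorem firstOrder_comp_comp (h₀ h₁ : W →ₗ[K] X) (g₀ g₁ : V →ₗ[K] W) (f₀ f₁ : U →ₗ[K] V) :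
    firstOrder h₀ h₁ ∘ₗ firstOrder g₀ g₁ ∘ₗ firstOrder f₀ f₁ =
      firstOrder (h₀ ∘ₗ g₀ ∘ₗ f₀)
        (h₁ ∘ₗ g₀ ∘ₗ f₀ + h₀ ∘ₗ g₁ ∘ₗ f₀ + h₀ ∘ₗ g₀ ∘ₗ f₁) := by
  simp only [firstOrder_comp, LinearMap.comp_add]
  congr 1
  abel

end FirstOrder

section TensorLegs

variable {K V : Type*} [CommSemiring K] [AddCommMonoid V] [Module K V]

/-- `id ⊗ f : V ⊗ V ⊗ V → V ⊗ V` for `f : V ⊗ V → V`. Threefold tensor powers are bracketed to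
the left throughout, so that `f ⊗ id` is simply `f.rTensor V`. -/
def mulRight (f : V ⊗[K] V →ₗ[K] V) : (V ⊗[K] V) ⊗[K] V →ₗ[K] V ⊗[K] V :=
  f.lTensor V ∘ₗ (TensorProduct.assoc K V V V).toLinearMap

/-- `id ⊗ g : V ⊗ V → V ⊗ V ⊗ V` for `g : V → V ⊗ V`, bracketed to the left. -/
def comulRight (g : V →ₗ[K] V ⊗[K] V) : V ⊗[K] V →ₗ[K] (V ⊗[K] V) ⊗[K] V :=
  (TensorProduct.assoc K V V V).symm.toLinearMap ∘ₗ g.lTensor V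

/-- `id ⊗ R : V ⊗ V ⊗ V → V ⊗ V ⊗ V` for `R : V ⊗ V → V ⊗ V`, bracketed to the left. -/
def endRight (R : V ⊗[K] V →ₗ[K] V ⊗[K] V) : (V ⊗[K] V) ⊗[K] V →ₗ[K] (V ⊗[K] V) ⊗[K] V :=
  (TensorProduct.assoc K V V V).symm.toLinearMap ∘ₗ R.lTensor V ∘ₗ
    (TensorProduct.assoc K V V V).toLinearMap

theorem endRight_comp (R R' : V ⊗[K] V →ₗ[K] V ⊗[K] V) :
    endRight R ∘ₗ endRight R' = endRight (R ∘ₗ R') := by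
  ext : 1
  simp [endRight, LinearMap.lTensor_comp, LinearMap.comp_assoc]

theorem endRight_id : endRight (LinearMap.id : V ⊗[K] V →ₗ[K] V ⊗[K] V) = LinearMap.id := by
  ext; simp [endRight]

theorem endRight_add (R R' : V ⊗[K] V →ₗ[K] V ⊗[K] V) :
    endRight (R + R') = endRight R + endRight R' := by
  simp only [endRight, LinearMap.lTensor_add, LinearMap.add_comp, LinearMap.comp_add]

theorem endRight_smul (c : K) (R : V ⊗[K] V →ₗ[K] V ⊗[K] V) :
    endRight (c • R) = c • endRight R := by
  simp only [endRight, LinearMap.lTensor_smul, LinearMap.smul_comp, LinearMap.comp_smul]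

theorem endRight_comul_comp_mul (g : V →ₗ[K] V ⊗[K] V) (f : V ⊗[K] V →ₗ[K] V) :
    endRight (g ∘ₗ f) = comulRight g ∘ₗ mulRight f := by
  simp only [endRight, comulRight, mulRight, LinearMap.lTensor_comp, LinearMap.comp_assoc]

theorem mulRight_comp_endRight (f : V ⊗[K] V →ₗ[K] V) (R : V ⊗[K] V →ₗ[K] V ⊗[K] V) :
    mulRight f ∘ₗ endRight R = mulRight (f ∘ₗ R) := by
  ext : 1
  simp [endRight, mulRight, LinearMap.lTensor_comp, LinearMap.comp_assoc]

theorem endRight_comp_comulRight (R : V ⊗[K] V →ₗ[K] V ⊗[K] V) (g : V →ₗ[K] V ⊗[K] V) :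
    endRight R ∘ₗ comulRight g = comulRight (R ∘ₗ g) := by
  ext : 1
  simp [endRight, comulRight, LinearMap.lTensor_comp, LinearMap.comp_assoc]

variable (K V) in
/-- The flip `x ⊗ y ↦ y ⊗ x` of `V ⊗ V`, as a linear map. -/
abbrev tensorFlip : V ⊗[K] V →ₗ[K] V ⊗[K] V :=
  (TensorProduct.comm K V V).toLinearMap

theorem tensorFlip_comp_self : tensorFlip K V ∘ₗ tensorFlip K V = LinearMap.id := by
  ext; simp

theorem tensorFlip_braid :
    (tensorFlip K V).rTensor V ∘ₗ endRight (tensorFlip K V) ∘ₗ (tensorFlip K V).rTensor V =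
      endRight (tensorFlip K V) ∘ₗ (tensorFlip K V).rTensor V ∘ₗ endRight (tensorFlip K V) := by
  ext; simp [endRight]

theorem mulRight_comp_flips (f : V ⊗[K] V →ₗ[K] V) :
    mulRight f ∘ₗ (tensorFlip K V).rTensor V ∘ₗ endRight (tensorFlip K V) =
      tensorFlip K V ∘ₗ f.rTensor V := by
  ext; simp [mulRight, endRight]

theorem flips_comp_rTensor (g : V →ₗ[K] V ⊗[K] V) :
    (tensorFlip K V).rTensor V ∘ₗ endRight (tensorFlip K V) ∘ₗ g.rTensor V =
      comulRight g ∘ₗ tensorFlip K V := by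
  ext x y
  have flips (t : V ⊗[K] V) :
      (tensorFlip K V).rTensor V (endRight (tensorFlip K V) (t ⊗ₜ y)) =
        (TensorProduct.assoc K V V V).symm (y ⊗ₜ t) := by
    induction t with
    | zero => simp
    | tmul u v => simp [endRight]
    | add t t' ht ht' => simp only [add_tmul, tmul_add, map_add, ht, ht']
  simpa [comulRight] using flips (g x)

end TensorLegs

section CommFrobenius

variable {K V : Type*} [CommSemiring K] [AddCommMonoid V] [Module K V]

/-- A commutative, cocommutative Frobenius structure on a module: a multiplication `μ` and a
comultiplication `Δ`, with neither a unit nor a counit. -/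
structure IsCommFrobenius (μ : V ⊗[K] V →ₗ[K] V) (Δ : V →ₗ[K] V ⊗[K] V) : Prop where
  mul_assoc : μ ∘ₗ μ.rTensor V = μ ∘ₗ mulRight μ
  comul_coassoc : Δ.rTensor V ∘ₗ Δ = comulRight Δ ∘ₗ Δ
  frobenius_left : Δ ∘ₗ μ = μ.rTensor V ∘ₗ comulRight Δ
  frobenius_right : Δ ∘ₗ μ = mulRight μ ∘ₗ Δ.rTensor V
  mul_comm : μ ∘ₗ tensorFlip K V = μ
  comul_comm : tensorFlip K V ∘ₗ Δ = Δ

/-- A 2-cocycle `(φ₁, φ₂)` of a commutative Frobenius structure `(μ, Δ)`: the equations saying that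
`(μ + εφ₁, Δ + εφ₂)` satisfies the axioms of `IsCommFrobenius` in first order, each written without
subtraction. -/
structure IsCommFrobeniusCocycle (μ : V ⊗[K] V →ₗ[K] V) (Δ : V →ₗ[K] V ⊗[K] V)
    (φ₁ : V ⊗[K] V →ₗ[K] V) (φ₂ : V →ₗ[K] V ⊗[K] V) : Prop where
  mul_assoc : μ ∘ₗ φ₁.rTensor V + φ₁ ∘ₗ μ.rTensor V = μ ∘ₗ mulRight φ₁ + φ₁ ∘ₗ mulRight μ
  comul_coassoc : Δ.rTensor V ∘ₗ φ₂ + φ₂.rTensor V ∘ₗ Δ = comulRight Δ ∘ₗ φ₂ + comulRight φ₂ ∘ₗ Δ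
  frobenius_left :
    Δ ∘ₗ φ₁ + φ₂ ∘ₗ μ = μ.rTensor V ∘ₗ comulRight φ₂ + φ₁.rTensor V ∘ₗ comulRight Δ
  frobenius_right : Δ ∘ₗ φ₁ + φ₂ ∘ₗ μ = mulRight μ ∘ₗ φ₂.rTensor V + mulRight φ₁ ∘ₗ Δ.rTensor V
  mul_comm : φ₁ ∘ₗ tensorFlip K V = φ₁
  comul_comm : tensorFlip K V ∘ₗ φ₂ = φ₂

variable {μ φ₁ : V ⊗[K] V →ₗ[K] V} {Δ φ₂ : V →ₗ[K] V ⊗[K] V}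

theorem IsCommFrobenius.isCommFrobeniusDiagram_firstOrder (h : IsCommFrobenius μ Δ)
    (hφ : IsCommFrobeniusCocycle μ Δ φ₁ φ₂) :
    IsCommFrobeniusDiagram (firstOrder μ φ₁) (firstOrder Δ φ₂)
      (firstOrder (μ.rTensor V) (φ₁.rTensor V)) (firstOrder (mulRight μ) (mulRight φ₁))
      (firstOrder (Δ.rTensor V) (φ₂.rTensor V)) (firstOrder (comulRight Δ) (comulRight φ₂))
      (firstOrder (tensorFlip K V) 0) (firstOrder ((tensorFlip K V).rTensor V) 0)
      (firstOrder (endRight (tensorFlip K V)) 0) := by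
  constructor <;>
    simp only [firstOrder_comp, ← firstOrder_id_zero, firstOrder_inj, LinearMap.zero_comp,
      LinearMap.comp_zero, add_zero, zero_add, and_true]
  case flip_flip₁₂ => rw [← LinearMap.rTensor_comp, tensorFlip_comp_self, LinearMap.rTensor_id]
  case flip_flip₂₃ => rw [endRight_comp, tensorFlip_comp_self, endRight_id]
  case braid => exact tensorFlip_braid
  case mul_natural => exact ⟨mulRight_comp_flips μ, mulRight_comp_flips φ₁⟩
  case comul_natural => exact ⟨flips_comp_rTensor Δ, flips_comp_rTensor φ₂⟩
  case mul_comm => exact ⟨h.mul_comm, hφ.mul_comm⟩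
  case mul_comm₁₂ => simp only [← LinearMap.rTensor_comp, h.mul_comm, hφ.mul_comm, and_self]
  case mul_comm₂₃ => simp only [mulRight_comp_endRight, h.mul_comm, hφ.mul_comm, and_self]
  case comul_comm₁₂ => simp only [← LinearMap.rTensor_comp, h.comul_comm, hφ.comul_comm, and_self]
  case comul_comm₂₃ =>
    simp only [endRight_comp_comulRight, h.comul_comm, hφ.comul_comm, and_self]
  case mul_assoc => exact ⟨h.mul_assoc, hφ.mul_assoc⟩
  case comul_coassoc => exact ⟨h.comul_coassoc, hφ.comul_coassoc⟩
  case frobenius_left => exact ⟨h.frobenius_left, hφ.frobenius_left⟩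
  case frobenius_right => exact ⟨h.frobenius_right, hφ.frobenius_right⟩

theorem cocycle_deformation_of_R_matrix_general (h : IsCommFrobenius μ Δ)
    (hφ : IsCommFrobeniusCocycle μ Δ φ₁ φ₂) (C T : K) (R₀ R₁ : V ⊗[K] V →ₗ[K] V ⊗[K] V)
    (hR₀ : R₀ = C • (Δ ∘ₗ μ) + T • tensorFlip K V) (hR₁ : R₁ = C • (Δ ∘ₗ φ₁ + φ₂ ∘ₗ μ)) :
    R₀.rTensor V ∘ₗ endRight R₀ ∘ₗ R₀.rTensor V = endRight R₀ ∘ₗ R₀.rTensor V ∘ₗ endRight R₀ ∧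
    R₁.rTensor V ∘ₗ endRight R₀ ∘ₗ R₀.rTensor V + R₀.rTensor V ∘ₗ endRight R₁ ∘ₗ R₀.rTensor V +
      R₀.rTensor V ∘ₗ endRight R₀ ∘ₗ R₁.rTensor V =
    endRight R₁ ∘ₗ R₀.rTensor V ∘ₗ endRight R₀ + endRight R₀ ∘ₗ R₁.rTensor V ∘ₗ endRight R₀ +
      endRight R₀ ∘ₗ R₀.rTensor V ∘ₗ endRight R₁ := by
  have rMatrix₁₂ : C • (firstOrder (Δ.rTensor V) (φ₂.rTensor V) ∘ₗ
      firstOrder (μ.rTensor V) (φ₁.rTensor V)) + T • firstOrder ((tensorFlip K V).rTensor V) 0 =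
      firstOrder (R₀.rTensor V) (R₁.rTensor V) := by
    simp only [hR₀, hR₁, firstOrder_comp, firstOrder_smul, firstOrder_add, smul_zero, add_zero,
      LinearMap.rTensor_add, LinearMap.rTensor_smul, LinearMap.rTensor_comp]
  have rMatrix₂₃ : C • (firstOrder (comulRight Δ) (comulRight φ₂) ∘ₗ
      firstOrder (mulRight μ) (mulRight φ₁)) + T • firstOrder (endRight (tensorFlip K V)) 0 =
      firstOrder (endRight R₀) (endRight R₁) := by
    simp only [hR₀, hR₁, firstOrder_comp, firstOrder_smul, firstOrder_add, smul_zero, add_zero,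
      endRight_add, endRight_smul, endRight_comul_comp_mul]
  have yangBaxter := (h.isCommFrobeniusDiagram_firstOrder hφ).yangBaxter C T
  rwa [rMatrix₁₂, rMatrix₂₃, firstOrder_comp_comp, firstOrder_comp_comp,
    firstOrder_inj] at yangBaxter

end CommFrobenius

section CochainConditions

variable {k A}

theorem IsFrobenius.isCommFrobenius {Δ : A →ₗ[k] A ⊗[k] A} (hΔ : IsFrobenius k A Δ)
    (hcomm : mu k A ∘ₗ tau k A = mu k A) (hcocomm : tau k A ∘ₗ Δ = Δ) :
    IsCommFrobenius (mu k A) Δ where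
  mul_assoc := by ext; simp [mu, mulRight, mul_assoc]
  comul_coassoc := hΔ.1
  frobenius_left := hΔ.2.1
  frobenius_right := hΔ.2.2
  mul_comm := hcomm
  comul_comm := hcocomm

theorem isCommFrobeniusCocycle_of_d_eq_zero {Δ : A →ₗ[k] A ⊗[k] A} {φ₁ : A ⊗[k] A →ₗ[k] A}
    {φ₂ : A →ₗ[k] A ⊗[k] A} (h₂₁ : d21 k A φ₁ = 0) (h₂₂₁ : d221 k A Δ φ₁ φ₂ = 0)
    (h₂₂₂ : d222 k A Δ φ₁ φ₂ = 0) (h₂₃ : d23 k A Δ φ₂ = 0) (hφ₁τ : φ₁ ∘ₗ tau k A = φ₁)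
    (hτφ₂ : tau k A ∘ₗ φ₂ = φ₂) : IsCommFrobeniusCocycle (mu k A) Δ φ₁ φ₂ where
  mul_assoc := (sub_eq_iff_eq_add.mp (sub_eq_zero.mp h₂₁)).trans (add_comm _ _)
  comul_coassoc := by
    refine LinearMap.ext fun x ↦ ?_
    have h₂₃x := LinearMap.congr_fun h₂₃ x
    simp only [d23, LinearMap.sub_apply] at h₂₃x
    exact (add_comm _ _).trans (sub_eq_iff_eq_add.mp (sub_eq_zero.mp h₂₃x))
  frobenius_left := sub_eq_iff_eq_add.mp (sub_eq_zero.mp h₂₂₁)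
  frobenius_right := sub_eq_iff_eq_add.mp (sub_eq_zero.mp h₂₂₂)
  mul_comm := hφ₁τ
  comul_comm := hτφ₂

end CochainConditions

/-- cocycle deformation of `R`-matrices, modulo `t²`: let `A` be commutative
and cocommutative with Frobenius structure `Δ`, let `(φ₁,φ₂)` satisfy all four 2-cocycle
conditions, `φ₁∘τ = φ₁`, `τ∘φ₂ = φ₂`, and suppose `μ∘Δ = c₀·id` and
`μ∘φ₂ + φ₁∘Δ = c₁·id`. Put `R₀ = C·(Δ∘μ) + T·τ` and `R₁ = C·(Δ∘φ₁ + φ₂∘μ)`. Then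
`R₀ + tR₁` satisfies the YBE over `k[t]/(t²)`, i.e. the `t⁰`-part (1) and
`t¹`-part (2) hold. -/
theorem cocycle_deformation_of_R_matrix (Δ : A →ₗ[k] A ⊗[k] A) (hΔ : IsFrobenius k A Δ)
    (hcomm : mu k A ∘ₗ tau k A = mu k A) (hcocomm : tau k A ∘ₗ Δ = Δ)
    (φ₁ : A ⊗[k] A →ₗ[k] A) (φ₂ : A →ₗ[k] A ⊗[k] A)
    (h1 : d21 k A φ₁ = 0) (h2 : d221 k A Δ φ₁ φ₂ = 0) (h2' : d222 k A Δ φ₁ φ₂ = 0)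
    (h3 : d23 k A Δ φ₂ = 0)
    (hφ₁τ : φ₁ ∘ₗ tau k A = φ₁) (hτφ₂ : tau k A ∘ₗ φ₂ = φ₂)
    (c₀ c₁ : k)
    (hc₀ : mu k A ∘ₗ Δ = c₀ • LinearMap.id)
    (hc₁ : mu k A ∘ₗ φ₂ + φ₁ ∘ₗ Δ = c₁ • LinearMap.id)
    (C T : k)
    (R₀ R₁ : A ⊗[k] A →ₗ[k] A ⊗[k] A)
    (hR₀ : R₀ = C • (Δ ∘ₗ mu k A) + T • tau k A)
    (hR₁ : R₁ = C • (Δ ∘ₗ φ₁ + φ₂ ∘ₗ mu k A)) :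
    rext k A R₀ ∘ₗ lext k A R₀ ∘ₗ rext k A R₀ =
      lext k A R₀ ∘ₗ rext k A R₀ ∘ₗ lext k A R₀ ∧
    rext k A R₁ ∘ₗ lext k A R₀ ∘ₗ rext k A R₀ +
      rext k A R₀ ∘ₗ lext k A R₁ ∘ₗ rext k A R₀ +
      rext k A R₀ ∘ₗ lext k A R₀ ∘ₗ rext k A R₁ =
    lext k A R₁ ∘ₗ rext k A R₀ ∘ₗ lext k A R₀ +
      lext k A R₀ ∘ₗ rext k A R₁ ∘ₗ lext k A R₀ +
      lext k A R₀ ∘ₗ rext k A R₀ ∘ₗ lext k A R₁ := by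
  exact cocycle_deformation_of_R_matrix_general (hΔ.isCommFrobenius hcomm hcocomm)
    (isCommFrobeniusCocycle_of_d_eq_zero h1 h2 h2' h3 hφ₁τ hτφ₂) C T R₀ R₁ hR₀ hR₁
end
end
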